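/- Let X be a real Hilbert space and let Ω, Ω_1, …, Ω_n (n ≥ 2) be nonempty closed convex subsets of X. Fix x̄ ∈ Ω, set J(x̄) := {i : x̄ ∉ Ω_i} and I(x̄) := {i : x̄ ∈ Ω_i}, and for i ∈ J(x̄) let a_i(x̄) := (x̄ − P(x̄;Ω_i))/d(x̄;Ω_i), where P(x̄;Ω_i) is the unique metric projection of x̄ onto the closed convex set Ω_i. Then x̄ is a global optimal solution of the distance version of the generalized Heron problem if and only if −Σ_{i∈J(x̄)} a_i(x̄) ∈ Σ_{i∈I(x̄)} (N(x̄;Ω_i) ∩ B) + N(x̄;Ω), where B is the closed unit ball of X and the sums are Minkowski sums of sets. -/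

import Mathlib

open Set Metric
open scoped RealInnerProductSpace

/-- The normal cone of convex analysis to a convex set `C` at `x̄ ∈ C`. -/
def convexNormalCone {X : Type*} [NormedAddCommGroup X] [InnerProductSpace ℝ X]
    (C : Set X) (xbar : X) : Set X :=
  {v | ∀ x ∈ C, ⟪v, x - xbar⟫ ≤ 0}

/-!
By Moreau–Rockafellar calculus, `x̄` minimizes a finite sum of continuous convex functions over a
convex set `Ω` iff some choice of subgradients at `x̄` sums to the negative of a normal to `Ω`.
The choice comes from a single Hahn–Banach separation in `(ι → E) × ℝ`: minimizing `∑ i, f i x`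
over `Ω` is minimizing the separable function `∑ i, f i (y i)` over the diagonal copy of `Ω`, and
a subgradient of a separable function is a tuple of subgradients. If `p` is a point of `C` nearest
to `x̄`, the subgradients of `d(·; C)` at `x̄` are the functionals of norm at most one that are
normal to `C` at `p` and attain `‖x̄ - p‖` on `x̄ - p`; in a Hilbert space and off `C`, the equality
case of Cauchy–Schwarz leaves only the unit vector along `x̄ - p`.
-/

section Subdifferential

variable {E : Type*} [AddCommGroup E] [Module ℝ E] [TopologicalSpace E]

/-- The subdifferential of `f : E → ℝ` at `x` in the sense of convex analysis, as a set of
continuous linear functionals. -/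
def subdifferential (f : E → ℝ) (x : E) : Set (StrongDual ℝ E) :=
  {g | ∀ y, g (y - x) ≤ f y - f x}

/-- The normal cone to `C` at `x`, as a set of continuous linear functionals; in a Hilbert space
`convexNormalCone` consists of the vectors that represent them. -/
def dualNormalCone (C : Set E) (x : E) : Set (StrongDual ℝ E) :=
  {g | ∀ y ∈ C, g (y - x) ≤ 0}

theorem exists_mem_subdifferential_neg_mem_dualNormalCone [IsTopologicalAddGroup E]
    [ContinuousSMul ℝ E] {f : E → ℝ} (hf : ConvexOn ℝ univ f) (hfc : Continuous f)
    {C : Set E} (hC : Convex ℝ C) {x : E} (hx : x ∈ C) (hmin : IsMinOn f C x) :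
    ∃ g ∈ subdifferential f x, -g ∈ dualNormalCone C x := by
  have hopen : IsOpen {q : E × ℝ | q.1 ∈ univ ∧ f q.1 < q.2} := by
    simpa only [mem_univ, true_and] using
      isOpen_lt (by fun_prop : Continuous fun q : E × ℝ => f q.1) continuous_snd
  have hdisj : Disjoint {q : E × ℝ | q.1 ∈ univ ∧ f q.1 < q.2} (C ×ˢ {f x}) := by
    rw [Set.disjoint_left]
    rintro ⟨y, _⟩ ⟨-, hlt⟩ ⟨hy, rfl⟩
    exact hlt.not_ge (hmin hy)
  obtain ⟨φ, u, hepi, hslice⟩ := geometric_hahn_banach_open hf.convex_strict_epigraph hopen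
    (hC.prod (convex_singleton (f x))) hdisj
  have hgraph (y : E) : φ (y, f y) ≤ u :=
    le_of_tendsto ((by fun_prop : Continuous fun r => φ (y, r)).continuousWithinAt (s := Ioi (f y)))
      (eventually_mem_nhdsWithin.mono fun r hr => (hepi (y, r) ⟨trivial, hr⟩).le)
  have hsplit (y : E) (r : ℝ) : φ (y, r) = φ (y, 0) + r * φ (0, 1) := by
    rw [← smul_eq_mul, ← map_smul, ← map_add]
    simp
  have hu : u ≤ φ (x, f x) := hslice _ ⟨hx, rfl⟩
  have hsub (y : E) : φ (y - x, 0) = φ (y, 0) - φ (x, 0) := by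
    rw [← map_sub]
    simp
  have hslope : 0 < -φ (0, 1) := by
    have habove := hepi (x, f x + 1) ⟨trivial, lt_add_one _⟩
    linarith [hsplit x (f x), hsplit x (f x + 1)]
  refine ⟨(-φ (0, 1))⁻¹ • φ.comp (.inl ℝ E ℝ), fun y => ?_, fun y hy => ?_⟩
  · change (-φ (0, 1))⁻¹ * φ (y - x, 0) ≤ f y - f x
    rw [inv_mul_le_iff₀ hslope]
    linarith [hgraph y, hsub y, hsplit y (f y), hsplit x (f x)]
  · change -((-φ (0, 1))⁻¹ * φ (y - x, 0)) ≤ 0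
    have hnonneg : 0 ≤ φ (y - x, 0) := by
      linarith [hgraph x, hslice (y, f x) ⟨hy, rfl⟩, hsub y, hsplit y (f x), hsplit x (f x)]
    exact neg_nonpos.2 (mul_nonneg (inv_nonneg.2 hslope.le) hnonneg)

end Subdifferential

section FiniteSum

variable {ι : Type*} [Fintype ι]

theorem comp_single_mem_subdifferential [DecidableEq ι] {E : ι → Type*}
    [∀ i, AddCommGroup (E i)] [∀ i, Module ℝ (E i)] [∀ i, TopologicalSpace (E i)]
    {f : ∀ i, E i → ℝ} {x : ∀ i, E i} {G : StrongDual ℝ (∀ i, E i)}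
    (hG : G ∈ subdifferential (fun y => ∑ i, f i (y i)) x) (i : ι) :
    G.comp (.single ℝ E i) ∈ subdifferential (f i) (x i) := by
  intro y
  have hdir : Function.update x i y - x = Pi.single i (y - x i) := by
    ext j
    obtain rfl | hj := eq_or_ne j i <;> simp [*]
  have hval : ∑ j, f j (Function.update x i y j) - ∑ j, f j (x j) = f i y - f i (x i) := by
    rw [← Finset.sum_sub_distrib, Fintype.sum_eq_single i] <;> simp +contextual
  have hle := hG (Function.update x i y)
  rwa [hdir, hval] at hle

theorem convexOn_sum_pi {E : ι → Type*} [∀ i, AddCommGroup (E i)] [∀ i, Module ℝ (E i)]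
    {f : ∀ i, E i → ℝ} (hf : ∀ i, ConvexOn ℝ univ (f i)) :
    ConvexOn ℝ univ fun y : ∀ i, E i => ∑ i, f i (y i) := by
  refine ⟨convex_univ, fun y _ z _ s t hs ht hst => ?_⟩
  simp only [Finset.smul_sum, ← Finset.sum_add_distrib]
  exact Finset.sum_le_sum fun i _ => (hf i).2 trivial trivial hs ht hst

variable {E : Type*} [AddCommGroup E] [Module ℝ E] [TopologicalSpace E]
  {f : ι → E → ℝ} {C : Set E} {x : E}

theorem isMinOn_sum_of_mem_subdifferential [IsTopologicalAddGroup E] {g : ι → StrongDual ℝ E}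
    (hg : ∀ i, g i ∈ subdifferential (f i) x) (hgC : -∑ i, g i ∈ dualNormalCone C x) :
    IsMinOn (fun y => ∑ i, f i y) C x := by
  refine isMinOn_iff.2 fun y hy => sub_nonneg.1 ?_
  calc 0 ≤ (∑ i, g i) (y - x) := neg_nonpos.1 (hgC y hy)
    _ = ∑ i, g i (y - x) := sum_apply ..
    _ ≤ ∑ i, (f i y - f i x) := Finset.sum_le_sum fun i _ => hg i y
    _ = ∑ i, f i y - ∑ i, f i x := Finset.sum_sub_distrib ..

theorem isMinOn_sum_iff_exists_mem_subdifferential [IsTopologicalAddGroup E] [ContinuousSMul ℝ E]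
    (hf : ∀ i, ConvexOn ℝ univ (f i)) (hfc : ∀ i, Continuous (f i))
    (hC : Convex ℝ C) (hx : x ∈ C) :
    IsMinOn (fun y => ∑ i, f i y) C x ↔
      ∃ g : ι → StrongDual ℝ E,
        (∀ i, g i ∈ subdifferential (f i) x) ∧ -∑ i, g i ∈ dualNormalCone C x := by
  classical
  refine ⟨fun hmin => ?_, fun ⟨g, hg, hgC⟩ => isMinOn_sum_of_mem_subdifferential hg hgC⟩
  let diag : E →ₗ[ℝ] ι → E := LinearMap.pi fun _ => LinearMap.id
  have hmin' : IsMinOn (fun y : ι → E => ∑ i, f i (y i)) (diag '' C) (diag x) := by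
    rintro _ ⟨y, hy, rfl⟩
    exact hmin hy
  obtain ⟨G, hG, hGC⟩ := exists_mem_subdifferential_neg_mem_dualNormalCone
    (convexOn_sum_pi hf) (by fun_prop) (hC.linear_image diag) (mem_image_of_mem diag hx) hmin'
  refine ⟨fun i => G.comp (.single ℝ (fun _ => E) i), comp_single_mem_subdifferential hG,
    fun y hy => ?_⟩
  have hdiag : (∑ i, G.comp (.single ℝ (fun _ => E) i)) (y - x) = G (diag y - diag x) := by
    rw [← map_sub, ← Finset.univ_sum_single (diag (y - x)), map_sum,
      sum_apply]
    rfl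
  simpa only [neg_apply, hdiag] using hGC _ (mem_image_of_mem diag hy)

end FiniteSum

section DistanceFunction

variable {E : Type*} [SeminormedAddCommGroup E] [NormedSpace ℝ E] {C : Set E} {x p : E}
  {g : StrongDual ℝ E}

theorem convexOn_infDist (hC : Convex ℝ C) (hne : C.Nonempty) :
    ConvexOn ℝ univ fun x => infDist x C := by
  refine ⟨convex_univ, fun x _ y _ s t hs ht hst => le_of_forall_pos_le_add fun ε hε => ?_⟩
  obtain ⟨q, hq, hxq⟩ := (infDist_lt_iff hne).1 (lt_add_of_pos_right (infDist x C) hε)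
  obtain ⟨r, hr, hyr⟩ := (infDist_lt_iff hne).1 (lt_add_of_pos_right (infDist y C) hε)
  calc infDist (s • x + t • y) C
      ≤ dist (s • x + t • y) (s • q + t • r) := infDist_le_dist_of_mem (hC hq hr hs ht hst)
    _ ≤ dist (s • x) (s • q) + dist (t • y) (t • r) := dist_add_add_le ..
    _ = s * dist x q + t * dist y r := by
      rw [dist_smul₀, dist_smul₀, Real.norm_of_nonneg hs, Real.norm_of_nonneg ht]
    _ ≤ s * (infDist x C + ε) + t * (infDist y C + ε) := by gcongr
    _ = s • infDist x C + t • infDist y C + ε := by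
      simp only [smul_eq_mul]
      linear_combination ε * hst

theorem norm_le_of_mem_subdifferential {f : E → ℝ} {K : NNReal} (hf : LipschitzWith K f)
    (hg : g ∈ subdifferential f x) : ‖g‖ ≤ K := by
  have hle (h : E) : g h ≤ K * ‖h‖ := by
    have hsub := hg (x + h)
    have hlip := hf.le_add_mul (x + h) x
    rw [add_sub_cancel_left] at hsub
    rw [dist_eq_norm, add_sub_cancel_left] at hlip
    linarith
  refine g.opNorm_le_bound K.coe_nonneg fun h => abs_le'.2 ⟨hle h, ?_⟩
  simpa only [map_neg, norm_neg] using hle (-h)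

theorem mem_subdifferential_infDist_iff (hp : p ∈ C) (hxp : ‖x - p‖ = infDist x C) :
    g ∈ subdifferential (infDist · C) x ↔
      g ∈ dualNormalCone C p ∧ ‖g‖ ≤ 1 ∧ g (x - p) = ‖x - p‖ := by
  have hle (hg : ‖g‖ ≤ 1) (h : E) : g h ≤ ‖h‖ :=
    (le_abs_self _).trans ((g.le_of_opNorm_le hg h).trans_eq (one_mul _))
  constructor
  · intro hg
    have hnorm : ‖g‖ ≤ 1 := norm_le_of_mem_subdifferential (lipschitz_infDist_pt C) hg
    have hsub (y : E) (hy : y ∈ C) : g (y - x) ≤ -‖x - p‖ := by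
      simpa only [infDist_zero_of_mem hy, zero_sub, hxp] using hg y
    have hattain : g (x - p) = ‖x - p‖ := by
      refine (hle hnorm _).antisymm ?_
      rw [← neg_sub p x, map_neg, neg_sub]
      exact le_neg_of_le_neg (hsub p hp)
    refine ⟨fun y hy => ?_, hnorm, hattain⟩
    rw [← sub_add_sub_cancel y x p, map_add, hattain]
    linarith [hsub y hy]
  · rintro ⟨hcone, hnorm, hattain⟩ y
    rw [le_sub_iff_add_le, le_infDist ⟨p, hp⟩]
    intro q hq
    calc g (y - x) + infDist x C = g (y - q) + g (q - p) := by
          rw [← hxp, ← hattain, ← map_add, ← map_add, sub_add_sub_cancel, sub_add_sub_cancel]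
      _ ≤ ‖y - q‖ + 0 := add_le_add (hle hnorm _) (hcone q hq)
      _ = dist y q := by rw [add_zero, dist_eq_norm]

end DistanceFunction

section InnerProductSpace

variable {X : Type*} [NormedAddCommGroup X] [InnerProductSpace ℝ X] {C : Set X} {x p u v : X}

theorem innerSL_mem_dualNormalCone_iff :
    innerSL ℝ v ∈ dualNormalCone C x ↔ v ∈ convexNormalCone C x :=
  Iff.rfl

theorem norm_le_one_and_inner_eq_norm_iff (hu : u ≠ 0) :
    ‖v‖ ≤ 1 ∧ ⟪v, u⟫ = ‖u‖ ↔ v = ‖u‖⁻¹ • u := by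
  have hpos : 0 < ‖u‖ := norm_pos_iff.2 hu
  constructor
  · rintro ⟨hv, hvu⟩
    have hone : ‖v‖ = 1 :=
      hv.antisymm (le_of_mul_le_mul_right (by simpa [hvu] using real_inner_le_norm v u) hpos)
    rw [eq_inv_smul_iff₀ hpos.ne', inner_eq_norm_mul_iff_real.1 (by rw [hvu, hone, one_mul]),
      hone, one_smul]
  · rintro rfl
    refine ⟨(norm_smul_inv_norm (𝕜 := ℝ) hu).le, ?_⟩
    rw [real_inner_smul_left, real_inner_self_eq_norm_mul_norm, inv_mul_cancel_left₀ hpos.ne']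

theorem sub_mem_convexNormalCone (hC : Convex ℝ C) (hp : p ∈ C) (hxp : ‖x - p‖ = infDist x C) :
    x - p ∈ convexNormalCone C p := by
  refine (norm_eq_iInf_iff_real_inner_le_zero hC hp).1 ?_
  simpa only [infDist_eq_iInf, dist_eq_norm] using hxp

theorem smul_mem_convexNormalCone {c : ℝ} (hc : 0 ≤ c) (hv : v ∈ convexNormalCone C x) :
    c • v ∈ convexNormalCone C x := fun y hy => by
  rw [real_inner_smul_left]
  exact mul_nonpos_of_nonneg_of_nonpos hc (hv y hy)

theorem innerSL_mem_subdifferential_infDist_iff_of_mem (hx : x ∈ C) :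
    innerSL ℝ v ∈ subdifferential (infDist · C) x ↔ v ∈ convexNormalCone C x ∧ ‖v‖ ≤ 1 := by
  rw [mem_subdifferential_infDist_iff hx (by simp [infDist_zero_of_mem hx]),
    innerSL_mem_dualNormalCone_iff, innerSL_apply_norm, sub_self, map_zero, norm_zero]
  simp only [and_true]

theorem innerSL_mem_subdifferential_infDist_iff_of_notMem (hC : Convex ℝ C) (hx : x ∉ C)
    (hp : p ∈ C) (hxp : ‖x - p‖ = infDist x C) :
    innerSL ℝ v ∈ subdifferential (infDist · C) x ↔ v = (infDist x C)⁻¹ • (x - p) := by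
  have hne : x - p ≠ 0 := sub_ne_zero.2 (ne_of_mem_of_not_mem hp hx).symm
  rw [mem_subdifferential_infDist_iff hp hxp, innerSL_mem_dualNormalCone_iff, innerSL_apply_norm,
    innerSL_apply_apply, norm_le_one_and_inner_eq_norm_iff hne, hxp, and_iff_right_iff_imp]
  rintro rfl
  exact smul_mem_convexNormalCone (inv_nonneg.2 infDist_nonneg) (sub_mem_convexNormalCone hC hp hxp)

theorem isMinOn_sum_iff_exists_innerSL_mem_subdifferential [CompleteSpace X] {ι : Type*} [Fintype ι]
    {f : ι → X → ℝ} (hf : ∀ i, ConvexOn ℝ univ (f i)) (hfc : ∀ i, Continuous (f i))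
    (hC : Convex ℝ C) (hx : x ∈ C) :
    IsMinOn (fun y => ∑ i, f i y) C x ↔
      ∃ b : ι → X,
        (∀ i, innerSL ℝ (b i) ∈ subdifferential (f i) x) ∧ -∑ i, b i ∈ convexNormalCone C x := by
  have hriesz : Function.Surjective (innerSL ℝ : X → StrongDual ℝ X) :=
    (InnerProductSpace.toDual ℝ X).surjective
  rw [isMinOn_sum_iff_exists_mem_subdifferential hf hfc hC hx, hriesz.comp_left.exists]
  simp only [Function.comp_apply, ← map_sum, ← map_neg, innerSL_mem_dualNormalCone_iff]

end InnerProductSpace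

theorem heron_convex_characterization_hilbert_general
    {X ι : Type*} [NormedAddCommGroup X] [InnerProductSpace ℝ X] [CompleteSpace X] [Fintype ι]
    {Ω : Set X} (hΩ : Convex ℝ Ω) {Ωi : ι → Set X} (hΩi : ∀ i, Convex ℝ (Ωi i))
    {xbar : X} (hxbar : xbar ∈ Ω)
    {p : ι → X} (hp : ∀ i, p i ∈ Ωi i ∧ ‖xbar - p i‖ = infDist xbar (Ωi i)) :
    (∀ x ∈ Ω, ∑ i, infDist xbar (Ωi i) ≤ ∑ i, infDist x (Ωi i)) ↔
      ∃ (b : ι → X) (w : X),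
        (∀ i, xbar ∉ Ωi i → b i = (infDist xbar (Ωi i))⁻¹ • (xbar - p i)) ∧
        (∀ i, xbar ∈ Ωi i → b i ∈ convexNormalCone (Ωi i) xbar ∧ ‖b i‖ ≤ 1) ∧
        w ∈ convexNormalCone Ω xbar ∧ ∑ i, b i + w = 0 := by
  have hsubdiff (b : ι → X) (i : ι) : innerSL ℝ (b i) ∈ subdifferential (infDist · (Ωi i)) xbar ↔
      (xbar ∉ Ωi i → b i = (infDist xbar (Ωi i))⁻¹ • (xbar - p i)) ∧
        (xbar ∈ Ωi i → b i ∈ convexNormalCone (Ωi i) xbar ∧ ‖b i‖ ≤ 1) := by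
    by_cases hi : xbar ∈ Ωi i
    · simp [innerSL_mem_subdifferential_infDist_iff_of_mem hi, hi]
    · simp [innerSL_mem_subdifferential_infDist_iff_of_notMem (hΩi i) hi (hp i).1 (hp i).2, hi]
  change IsMinOn (fun x => ∑ i, infDist x (Ωi i)) Ω xbar ↔ _
  rw [isMinOn_sum_iff_exists_innerSL_mem_subdifferential
    (fun i => convexOn_infDist (hΩi i) ⟨p i, (hp i).1⟩)
    (fun i => continuous_infDist_pt (Ωi i)) hΩ hxbar]
  simp only [hsubdiff, forall_and, and_assoc, ← neg_eq_iff_add_eq_zero,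
    exists_and_left, exists_eq_right']

/-- Characterization of optimal solutions to the (distance version of the) generalized
Heron problem with convex data in a Hilbert space: `x̄ ∈ Ω` is a global optimal
solution iff `−Σ_{i ∈ J(x̄)} aᵢ(x̄) ∈ Σ_{i ∈ I(x̄)} (N(x̄;Ωᵢ) ∩ B) + N(x̄;Ω)`, where
`aᵢ(x̄) = (x̄ − P(x̄;Ωᵢ))/d(x̄;Ωᵢ)` and `J(x̄) = {i : x̄ ∉ Ωᵢ}`, `I(x̄) = {i : x̄ ∈ Ωᵢ}`.
The Minkowski-sum inclusion is expressed by selections `bᵢ` with `bᵢ = aᵢ(x̄)` for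
`i ∈ J(x̄)`, `bᵢ ∈ N(x̄;Ωᵢ) ∩ B` for `i ∈ I(x̄)`, and `Σᵢ bᵢ + w = 0`, `w ∈ N(x̄;Ω)`. -/
theorem heron_convex_characterization_hilbert
    {X : Type*} [NormedAddCommGroup X] [InnerProductSpace ℝ X] [CompleteSpace X]
    (n : ℕ) (hn : 2 ≤ n)
    (Ω : Set X) (hΩne : Ω.Nonempty) (hΩc : IsClosed Ω) (hΩconv : Convex ℝ Ω)
    (Ωi : Fin n → Set X) (hΩine : ∀ i, (Ωi i).Nonempty) (hΩic : ∀ i, IsClosed (Ωi i))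
    (hΩiconv : ∀ i, Convex ℝ (Ωi i))
    (xbar : X) (hxbar : xbar ∈ Ω)
    (p : Fin n → X) (hp : ∀ i, p i ∈ Ωi i ∧ ‖xbar - p i‖ = infDist xbar (Ωi i))
    (a : Fin n → X) (ha : ∀ i, a i = (infDist xbar (Ωi i))⁻¹ • (xbar - p i)) :
    (∀ x ∈ Ω, ∑ i, infDist xbar (Ωi i) ≤ ∑ i, infDist x (Ωi i)) ↔
      ∃ (b : Fin n → X) (w : X),
        (∀ i, xbar ∉ Ωi i → b i = a i) ∧
        (∀ i, xbar ∈ Ωi i → b i ∈ convexNormalCone (Ωi i) xbar ∧ ‖b i‖ ≤ 1) ∧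
        w ∈ convexNormalCone Ω xbar ∧ ∑ i, b i + w = 0 := by
  obtain rfl : a = _ := funext ha
  exact heron_convex_characterization_hilbert_general hΩconv hΩiconv hxbar hp
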